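/- arXiv:1504.03026 — 2 statements merged into one kernel-verified Lean document; each statement's English description precedes it below -/
import Mathlib

section
/- For any graph function α, the maximum height is zero: y_max = max_v y_v = 0; equivalently, min_v r*_v = 0. -/
open Filter Topology

variable {V : Type*}

/-- Maximum weight of an edge leaving `v` (as a supremum over the finite edge set). -/
noncomputable def outMax (E : V → V → Prop) (α : V → V → ℝ) (v : V) : ℝ :=
  sSup {x : ℝ | ∃ w, E v w ∧ x = α v w}

/-- Maximum weight of an edge entering `v`. -/
noncomputable def inMax (E : V → V → Prop) (α : V → V → ℝ) (v : V) : ℝ :=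
  sSup {x : ℝ | ∃ u, E u v ∧ x = α u v}

/-- A graph function is balanced if the max outgoing weight equals the max incoming
weight at every vertex. -/
def IsBalancedGF (E : V → V → Prop) (α : V → V → ℝ) : Prop :=
  ∀ v, outMax E α v = inMax E α v

/-- Raising imbalance at `v`. -/
noncomputable def rhoR (E : V → V → Prop) (α : V → V → ℝ) (v : V) : ℝ :=
  max 0 (outMax E α v - inMax E α v)

/-- Lowering imbalance at `v`. -/
noncomputable def rhoL (E : V → V → Prop) (α : V → V → ℝ) (v : V) : ℝ :=
  max 0 (inMax E α v - outMax E α v)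

/-- A balancing operation at `v`: add `(α_v^out − α_v^in)/2` to every edge entering `v`
and subtract the same quantity from every edge leaving `v` (a self-loop is unchanged). -/
noncomputable def balanceAt [DecidableEq V] (E : V → V → Prop) (α : V → V → ℝ) (v : V) :
    V → V → ℝ :=
  fun a b =>
    α a b + (if b = v then (outMax E α v - inMax E α v) / 2 else 0)
          - (if a = v then (outMax E α v - inMax E α v) / 2 else 0)

/-- A raising operation at `v`: balance at `v` if the raising imbalance is positive,
otherwise do nothing. -/
noncomputable def raiseOp [DecidableEq V] (E : V → V → Prop) (α : V → V → ℝ) (v : V) :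
    V → V → ℝ :=
  if 0 < rhoR E α v then balanceAt E α v else α

/-- A lowering operation at `v`: balance at `v` if the lowering imbalance is positive,
otherwise do nothing. -/
noncomputable def lowerOp [DecidableEq V] (E : V → V → Prop) (α : V → V → ℝ) (v : V) :
    V → V → ℝ :=
  if 0 < rhoL E α v then balanceAt E α v else α

/-- A sequence of vertices is fair if every vertex appears infinitely often. -/
def Fair (σ : ℕ → V) : Prop := ∀ (v : V) (N : ℕ), ∃ t, N ≤ t ∧ σ t = v

/-- State after `t` raising operations along the sequence `σ`. -/
noncomputable def raiseIter [DecidableEq V] (E : V → V → Prop) (α : V → V → ℝ)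
    (σ : ℕ → V) : ℕ → V → V → ℝ
  | 0 => α
  | t + 1 => raiseOp E (raiseIter E α σ t) (σ t)

/-- State after `t` lowering operations along the sequence `σ`. -/
noncomputable def lowerIter [DecidableEq V] (E : V → V → Prop) (α : V → V → ℝ)
    (σ : ℕ → V) : ℕ → V → V → ℝ
  | 0 => α
  | t + 1 => lowerOp E (lowerIter E α σ t) (σ t)

/-- The raising vector: cumulative amount by which each vertex has been raised after
`t` raising operations along `σ`. -/
noncomputable def rvec [DecidableEq V] (E : V → V → Prop) (α : V → V → ℝ)
    (σ : ℕ → V) : ℕ → V → ℝ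
  | 0 => fun _ => 0
  | t + 1 => fun u =>
      rvec E α σ t u + (if u = σ t then rhoR E (raiseIter E α σ t) (σ t) / 2 else 0)

/-- State after performing raising operations along a finite list of vertices. -/
noncomputable def raiseList [DecidableEq V] (E : V → V → Prop) :
    (V → V → ℝ) → List V → V → V → ℝ
  | α, [] => α
  | α, v :: l => raiseList E (raiseOp E α v) l

/-- Raising vector accumulated along a finite list of raising operations. -/
noncomputable def rvecList [DecidableEq V] (E : V → V → Prop) :
    (V → V → ℝ) → List V → V → ℝ
  | _, [] => fun _ => 0
  | α, v :: l => fun u =>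
      (if u = v then rhoR E α v / 2 else 0) + rvecList E (raiseOp E α v) l u

/-- State after performing (unconditional) balancing operations along a list. -/
noncomputable def balList [DecidableEq V] (E : V → V → Prop) :
    (V → V → ℝ) → List V → V → V → ℝ
  | α, [] => α
  | α, v :: l => balList E (balanceAt E α v) l

/-- State after `t` balancing operations along the sequence `σ`. -/
noncomputable def balIter [DecidableEq V] (E : V → V → Prop) (α : V → V → ℝ)
    (σ : ℕ → V) : ℕ → V → V → ℝ
  | 0 => α
  | t + 1 => balanceAt E (balIter E α σ t) (σ t)

/-- Two graph functions are equivalent if their sums around every directed cycle agree. -/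
def Equivalent (E : V → V → Prop) (α γ : V → V → ℝ) : Prop :=
  ∀ (k : ℕ) (f : ZMod (k + 1) → V), (∀ i, E (f i) (f (i + 1))) →
    (∑ i, α (f i) (f (i + 1))) = ∑ i, γ (f i) (f (i + 1))

/-- The raising-balanced graph function determined by the limiting raising vector. -/
noncomputable def alphaR (α : V → V → ℝ) (rstar : V → ℝ) : V → V → ℝ :=
  fun u v => α u v + rstar v - rstar u

/-- Height of a vertex: `y_v = -r*_v`. -/
noncomputable def height (rstar : V → ℝ) (v : V) : ℝ := -rstar v

/-- Level of a vertex: maximum over incoming edges of `α^R`. -/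
noncomputable def level (E : V → V → Prop) (α : V → V → ℝ) (rstar : V → ℝ) (v : V) : ℝ :=
  inMax E (alphaR α rstar) v

/-- Momentum of a vertex: `m_v = max over edges (u,v) entering v of (α_{uv} − x_v)`. -/
noncomputable def momentum (E : V → V → Prop) (α : V → V → ℝ) (rstar : V → ℝ) (v : V) : ℝ :=
  sSup {c : ℝ | ∃ u, E u v ∧ c = α u v - level E α rstar v}

section helpers

lemma le_outMax [Finite V] (E : V → V → Prop) (α : V → V → ℝ) {v w : V} (h : E v w) :
    α v w ≤ outMax E α v := by
  apply le_csSup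
  · apply Set.Finite.bddAbove
    apply (Set.finite_range (fun w => α v w)).subset
    rintro x ⟨w, _, rfl⟩
    exact ⟨w, rfl⟩
  · exact ⟨w, h, rfl⟩

lemma le_inMax [Finite V] (E : V → V → Prop) (α : V → V → ℝ) {u v : V} (h : E u v) :
    α u v ≤ inMax E α v := by
  apply le_csSup
  · apply Set.Finite.bddAbove
    apply (Set.finite_range (fun w => α w v)).subset
    rintro x ⟨w, _, rfl⟩
    exact ⟨w, rfl⟩
  · exact ⟨u, h, rfl⟩

lemma outMax_le (E : V → V → Prop) (α : V → V → ℝ) {v : V} (h : ∃ w, E v w) {c : ℝ}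
    (hc : ∀ w, E v w → α v w ≤ c) : outMax E α v ≤ c := by
  obtain ⟨w, hw⟩ := h
  refine csSup_le ⟨_, ⟨w, hw, rfl⟩⟩ ?_
  rintro x ⟨w, hw, rfl⟩
  exact hc w hw

lemma inMax_le (E : V → V → Prop) (α : V → V → ℝ) {v : V} (h : ∃ u, E u v) {c : ℝ}
    (hc : ∀ u, E u v → α u v ≤ c) : inMax E α v ≤ c := by
  obtain ⟨w, hw⟩ := h
  refine csSup_le ⟨_, ⟨w, hw, rfl⟩⟩ ?_
  rintro x ⟨w, hw, rfl⟩
  exact hc w hw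

lemma raiseIter_eq [DecidableEq V] (E : V → V → Prop) (α : V → V → ℝ) (σ : ℕ → V) (t : ℕ) :
    raiseIter E α σ t = alphaR α (rvec E α σ t) := by
  induction t with
  | zero => funext a b; simp [raiseIter, alphaR, rvec]
  | succ t ih =>
    funext a b
    have hab : raiseIter E α σ t a b = α a b + rvec E α σ t b - rvec E α σ t a := by
      rw [ih]; rfl
    simp only [raiseIter, raiseOp, alphaR, rvec]
    by_cases h : 0 < rhoR E (raiseIter E α σ t) (σ t)
    · have h2 : rhoR E (raiseIter E α σ t) (σ t) =
        outMax E (raiseIter E α σ t) (σ t) - inMax E (raiseIter E α σ t) (σ t) := by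
        unfold rhoR at h ⊢
        rcases lt_max_iff.1 h with h | h
        · exact absurd h (lt_irrefl _)
        · exact max_eq_right h.le
      rw [if_pos h]
      simp only [balanceAt]
      rw [h2, hab]; ring
    · have h2 : rhoR E (raiseIter E α σ t) (σ t) = 0 :=
        le_antisymm (not_lt.1 h) (le_max_left _ _)
      rw [if_neg h, h2, hab]; simp

lemma rvec_nonneg [DecidableEq V] (E : V → V → Prop) (α : V → V → ℝ) (σ : ℕ → V) (t : ℕ) (v : V) :
    0 ≤ rvec E α σ t v := by
  induction t with
  | zero => simp [rvec]
  | succ t ih =>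
    simp only [rvec]
    have : 0 ≤ rhoR E (raiseIter E α σ t) (σ t) := le_max_left _ _
    split_ifs <;> linarith

lemma rvec_le [Finite V] [DecidableEq V] (E : V → V → Prop)
    (hout : ∀ v, ∃ w, E v w) (hin : ∀ v, ∃ u, E u v) (α : V → V → ℝ) (s : V → ℝ)
    (hs0 : ∀ v, 0 ≤ s v) (hs : ∀ v, outMax E (alphaR α s) v ≤ inMax E (alphaR α s) v)
    (σ : ℕ → V) (t : ℕ) : ∀ v, rvec E α σ t v ≤ s v := by
  induction t with
  | zero => intro v; simpa [rvec] using hs0 v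
  | succ t ih =>
    intro v
    simp only [rvec]
    split_ifs with hv
    swap
    · simpa using ih v
    rw [← hv, raiseIter_eq]
    set r := rvec E α σ t
    have hv0 := ih v
    have h1 : outMax E (alphaR α r) v ≤ outMax E (alphaR α s) v + (s v - r v) := by
      apply outMax_le E _ (hout v)
      intro w hw
      have := le_outMax E (alphaR α s) hw
      have := ih w
      simp only [alphaR] at *
      linarith
    have h2 : inMax E (alphaR α s) v ≤ inMax E (alphaR α r) v + (s v - r v) := by
      apply inMax_le E _ (hin v)
      intro w hw
      have := le_inMax E (alphaR α r) hw
      have := ih w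
      simp only [alphaR] at *
      linarith
    have h3 : rhoR E (alphaR α r) v ≤ 2 * (s v - r v) := by
      apply max_le
      · linarith
      · linarith [hs v]
    linarith

lemma exists_fair [Fintype V] [Nonempty V] : ∃ σ : ℕ → V, Fair σ := by
  have hpos : 0 < Fintype.card V := Fintype.card_pos
  refine ⟨fun t => (Fintype.equivFin V).symm ⟨t % Fintype.card V, Nat.mod_lt _ hpos⟩, ?_⟩
  intro v N
  refine ⟨(Fintype.equivFin V v : ℕ) + Fintype.card V * N, ?_, ?_⟩
  · nlinarith
  · rw [Equiv.symm_apply_eq]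
    ext
    simp [Nat.mod_eq_of_lt (Fintype.equivFin V v).2]

lemma limit_balanced [Fintype V] [DecidableEq V] (E : V → V → Prop)
    (hout : ∀ v, ∃ w, E v w) (hin : ∀ v, ∃ u, E u v) (α : V → V → ℝ) (s : V → ℝ)
    (σ : ℕ → V) (hσ : Fair σ)
    (h : ∀ v, Tendsto (fun t => rvec E α σ t v) atTop (nhds (s v))) (v : V) :
    outMax E (alphaR α s) v ≤ inMax E (alphaR α s) v := by
  apply le_of_forall_pos_le_add
  intro ε hε
  have hev : ∀ᶠ t in atTop, ∀ u, |rvec E α σ t u - s u| < ε / 8 := by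
    rw [eventually_all]
    intro u
    have := (Metric.tendsto_nhds.1 (h u)) (ε / 8) (by positivity)
    simpa [Real.dist_eq] using this
  obtain ⟨N, hN⟩ := eventually_atTop.1 hev
  obtain ⟨t, ht, hv⟩ := hσ v N
  have a1 := hN t ht
  have a2 := hN (t + 1) (by omega) v
  have b2 := a1 v
  simp only [rvec, hv, if_true] at a2
  rw [raiseIter_eq] at a2
  set r := rvec E α σ t
  have h3 : outMax E (alphaR α r) v - inMax E (alphaR α r) v ≤ rhoR E (alphaR α r) v :=
    le_max_right _ _
  have h1 : outMax E (alphaR α s) v ≤ outMax E (alphaR α r) v + ε / 4 := by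
    apply outMax_le E _ (hout v)
    intro w hw
    have := le_outMax E (alphaR α r) hw
    have c := a1 w
    rw [abs_lt] at c b2
    simp only [alphaR] at *
    linarith
  have h2 : inMax E (alphaR α r) v ≤ inMax E (alphaR α s) v + ε / 4 := by
    apply inMax_le E _ (hin v)
    intro w hw
    have := le_inMax E (alphaR α s) hw
    have c := a1 w
    rw [abs_lt] at c b2
    simp only [alphaR] at *
    linarith
  rw [abs_lt] at a2 b2
  linarith

end helpers

/-- The maximum height is zero; equivalently `min_v r*_v = 0`. -/
theorem max_height_eq_zero
    [Fintype V] [Nonempty V] [DecidableEq V] (E : V → V → Prop)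
    (hout : ∀ v, ∃ w, E v w) (hin : ∀ v, ∃ u, E u v)
    (hconn : ∀ u v : V, Relation.ReflTransGen E u v)
    (α : V → V → ℝ) (rstar : V → ℝ)
    (hrstar : ∀ σ : ℕ → V, Fair σ → ∀ v,
      Tendsto (fun t => rvec E α σ t v) atTop (nhds (rstar v))) :
    Finset.univ.sup' Finset.univ_nonempty (height rstar) = 0 ∧
    Finset.univ.inf' Finset.univ_nonempty rstar = 0 := by
  obtain ⟨σ, hσ⟩ := exists_fair (V := V)
  have hlim := hrstar σ hσ
  have hbal := limit_balanced E hout hin α rstar σ hσ hlim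
  have hnn : ∀ v, 0 ≤ rstar v := fun v =>
    ge_of_tendsto' (hlim v) (fun t => rvec_nonneg E α σ t v)
  obtain ⟨m, hm⟩ := Finite.exists_min rstar
  have hm0 : rstar m = 0 := by
    have hal : alphaR α (fun v => rstar v - rstar m) = alphaR α rstar := by
      funext a b
      simp only [alphaR]
      ring
    have hle := rvec_le E hout hin α (fun v => rstar v - rstar m)
      (fun v => sub_nonneg.2 (hm v)) (by rw [hal]; exact hbal) σ
    have := le_of_tendsto' (hlim m) (fun t => hle t m)
    linarith [hnn m]
  constructor
  · apply le_antisymm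
    · apply Finset.sup'_le
      intro v _
      simpa [height] using hnn v
    · have := Finset.le_sup' (height rstar) (Finset.mem_univ m)
      have e : height rstar m = 0 := by simp [height, hm0]
      rwa [e] at this
  · apply le_antisymm
    · have := Finset.inf'_le rstar (Finset.mem_univ m)
      rwa [hm0] at this
    · apply Finset.le_inf'
      intro v _
      exact hnn v
end

section
/- For any graph function α, ρ^R/2 ≤ h, where ρ^R = max_v ρ_v^R is the raising imbalance of α and h = y_max − y_min is the difference between the maximum and minimum heights. -/
open Filter Topology

variable {V : Type*}

theorem aux_bdd_out [Finite V] (E : V → V → Prop) (α : V → V → ℝ) (v : V) :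
    BddAbove {x : ℝ | ∃ w, E v w ∧ x = α v w} := by
  apply ((Set.finite_range (α v)).subset _).bddAbove
  rintro x ⟨w, _, rfl⟩
  exact ⟨w, rfl⟩

theorem aux_bdd_in [Finite V] (E : V → V → Prop) (α : V → V → ℝ) (v : V) :
    BddAbove {x : ℝ | ∃ u, E u v ∧ x = α u v} := by
  apply ((Set.finite_range (fun u => α u v)).subset _).bddAbove
  rintro x ⟨w, _, rfl⟩
  exact ⟨w, rfl⟩

theorem aux_le_out [Finite V] {E : V → V → Prop} (α : V → V → ℝ) {v w : V} (h : E v w) :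
    α v w ≤ outMax E α v := le_csSup (aux_bdd_out E α v) ⟨w, h, rfl⟩

theorem aux_le_in [Finite V] {E : V → V → Prop} (α : V → V → ℝ) {u v : V} (h : E u v) :
    α u v ≤ inMax E α v := le_csSup (aux_bdd_in E α v) ⟨u, h, rfl⟩

theorem aux_out_le {E : V → V → Prop} {α : V → V → ℝ} {v : V} {c : ℝ} (hv : ∃ w, E v w)
    (h : ∀ w, E v w → α v w ≤ c) : outMax E α v ≤ c := by
  obtain ⟨w, hw⟩ := hv
  refine csSup_le ⟨_, ⟨w, hw, rfl⟩⟩ ?_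
  rintro x ⟨w, hw, rfl⟩
  exact h w hw

theorem aux_in_le {E : V → V → Prop} {α : V → V → ℝ} {v : V} {c : ℝ} (hv : ∃ u, E u v)
    (h : ∀ u, E u v → α u v ≤ c) : inMax E α v ≤ c := by
  obtain ⟨w, hw⟩ := hv
  refine csSup_le ⟨_, ⟨w, hw, rfl⟩⟩ ?_
  rintro x ⟨w, hw, rfl⟩
  exact h w hw

theorem aux_iter [DecidableEq V] (E : V → V → Prop) (α : V → V → ℝ) (σ : ℕ → V) (t : ℕ) (a b : V) :
    raiseIter E α σ t a b = α a b + rvec E α σ t b - rvec E α σ t a := by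
  induction t with
  | zero => simp [raiseIter, rvec]
  | succ t ih =>
    simp only [raiseIter, rvec, raiseOp]
    by_cases h : 0 < rhoR E (raiseIter E α σ t) (σ t)
    · have h2 : rhoR E (raiseIter E α σ t) (σ t) =
          outMax E (raiseIter E α σ t) (σ t) - inMax E (raiseIter E α σ t) (σ t) := by
        unfold rhoR at h ⊢
        rcases le_total 0 (outMax E (raiseIter E α σ t) (σ t) -
          inMax E (raiseIter E α σ t) (σ t)) with h3 | h3
        · exact max_eq_right h3
        · rw [max_eq_left h3] at h; exact absurd h (lt_irrefl _)
      rw [if_pos h, h2]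
      simp only [balanceAt]
      rw [ih]; ring
    · have h2 : rhoR E (raiseIter E α σ t) (σ t) = 0 :=
        le_antisymm (not_lt.mp h) (le_max_left _ _)
      rw [if_neg h, h2, ih]; simp

theorem aux_fair [Finite V] [Nonempty V] : ∃ σ : ℕ → V, Fair σ := by
  obtain ⟨f, hf⟩ := exists_surjective_nat V
  refine ⟨fun t => f (Nat.unpair t).1, fun v N => ?_⟩
  obtain ⟨k, rfl⟩ := hf v
  exact ⟨Nat.pair k N, Nat.right_le_pair _ _, by simp⟩

theorem aux_balanced [Finite V] [Nonempty V] [DecidableEq V] (E : V → V → Prop)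
    (hin : ∀ v, ∃ u, E u v)
    (α : V → V → ℝ) (rstar : V → ℝ)
    (hrstar : ∀ σ : ℕ → V, Fair σ → ∀ v,
      Tendsto (fun t => rvec E α σ t v) atTop (nhds (rstar v))) {v w : V} (hvw : E v w) :
    alphaR α rstar v w ≤ inMax E (alphaR α rstar) v := by
  obtain ⟨σ, hσ⟩ := aux_fair (V := V)
  apply le_of_forall_pos_le_add
  intro ε hε
  have hev : ∀ᶠ t in atTop, ∀ u, |rvec E α σ t u - rstar u| < ε / 8 := by
    rw [eventually_all]
    intro u
    have := (Metric.tendsto_nhds.1 (hrstar σ hσ u)) (ε / 8) (by positivity)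
    simpa [Real.dist_eq] using this
  obtain ⟨N, hN⟩ := eventually_atTop.1 hev
  obtain ⟨t, ht, hv⟩ := hσ v N
  have h1 := hN t ht
  have h2 := abs_lt.1 (hN (t + 1) (by omega) v)
  have hv1 := abs_lt.1 (h1 v)
  have hw1 := abs_lt.1 (h1 w)
  have hstep : rvec E α σ (t + 1) v =
      rvec E α σ t v + rhoR E (raiseIter E α σ t) v / 2 := by
    simp [rvec, hv]
  have hr : outMax E (raiseIter E α σ t) v - inMax E (raiseIter E α σ t) v
      ≤ rhoR E (raiseIter E α σ t) v := le_max_right _ _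
  have ho := aux_le_out (raiseIter E α σ t) hvw
  rw [aux_iter] at ho
  have hi : inMax E (raiseIter E α σ t) v ≤ inMax E (alphaR α rstar) v + ε / 4 := by
    apply aux_in_le (hin v)
    intro u hu
    have h3 := aux_le_in (alphaR α rstar) hu
    have hu1 := abs_lt.1 (h1 u)
    rw [aux_iter]
    simp only [alphaR] at h3 ⊢
    linarith
  have : alphaR α rstar v w = α v w + rstar w - rstar v := rfl
  linarith

/-- `ρ^R/2 ≤ h`, where `ρ^R = max_v ρ_v^R` and
`h = y_max − y_min`. -/
theorem raising_imbalance_le_height_spread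
    [Fintype V] [Nonempty V] [DecidableEq V] (E : V → V → Prop)
    (hout : ∀ v, ∃ w, E v w) (hin : ∀ v, ∃ u, E u v)
    (hconn : ∀ u v : V, Relation.ReflTransGen E u v)
    (α : V → V → ℝ) (rstar : V → ℝ)
    (hrstar : ∀ σ : ℕ → V, Fair σ → ∀ v,
      Tendsto (fun t => rvec E α σ t v) atTop (nhds (rstar v))) :
    (Finset.univ.sup' Finset.univ_nonempty fun v => rhoR E α v) / 2 ≤
      Finset.univ.sup' Finset.univ_nonempty (height rstar) -
        Finset.univ.inf' Finset.univ_nonempty (height rstar) := by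
  have key : ∀ v, rhoR E α v ≤ 2 * (Finset.univ.sup' Finset.univ_nonempty (height rstar) -
        Finset.univ.inf' Finset.univ_nonempty (height rstar)) := by
    intro v
    set M := Finset.univ.sup' Finset.univ_nonempty (height rstar) with hM
    set m := Finset.univ.inf' Finset.univ_nonempty (height rstar) with hm
    have hle : ∀ u, -rstar u ≤ M := fun u =>
      Finset.le_sup' (height rstar) (Finset.mem_univ u)
    have hge : ∀ u, m ≤ -rstar u := fun u =>
      Finset.inf'_le (height rstar) (Finset.mem_univ u)
    have hv1 := hle v
    have hv2 := hge v
    apply max_le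
    · linarith
    · have ho : outMax E α v ≤ inMax E (alphaR α rstar) v + rstar v + M := by
        apply aux_out_le (hout v)
        intro w hw
        have h1 := aux_balanced E hin α rstar hrstar hw
        have h2 : alphaR α rstar v w = α v w + rstar w - rstar v := rfl
        have := hle w
        linarith
      have hi : inMax E (alphaR α rstar) v ≤ inMax E α v + rstar v + M := by
        apply aux_in_le (hin v)
        intro u hu
        have h1 := aux_le_in α hu
        have h2 : alphaR α rstar u v = α u v + rstar v - rstar u := rfl
        have := hle u
        linarith
      linarith
  have := Finset.sup'_le Finset.univ_nonempty (fun v => rhoR E α v) (fun v _ => key v)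
  linarith
end
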